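/- Let γ : [0,1] → ℝ² be a closed piecewise cubic Bézier curve consisting of n segments, the k-th segment (1 ≤ k ≤ n) being the cubic Bézier curve with control points P_{k,0}, P_{k,1}, P_{k,2}, P_{k,3}, where P_{k,3} = P_{k+1,0} for k < n and P_{n,3} = P_{1,0}. Let z ∈ ℝ² be a point not belonging to the convex hull of {P_{k,0}, P_{k,1}, P_{k,2}, P_{k,3}} for any k. Then γ is homotopic, as a loop based at P_{1,0} within ℝ² \ {z}, to the closed polygon through the nodes P_{1,0}, P_{2,0}, …, P_{n,0}, P_{1,0} (the concatenation of the straight line segments between consecutive nodes); consequently γ and the nodal polygon have the same winding number about z. -/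

import Mathlib

open scoped BigOperators

/-- The cubic Bernstein polynomial `B_i(t) = C(3,i) t^i (1-t)^(3-i)`. -/
noncomputable def bern (i : ℕ) (t : ℝ) : ℝ :=
  (Nat.choose 3 i : ℝ) * t ^ i * (1 - t) ^ (3 - i)

/-!
Over the parameter interval `[k/n, (k+1)/n]` the curve is a convex combination of the control points
of the `k`-th segment, and the edge of the polygon joins two of these points. So both lie in
the convex hull of the segment's control points, and the straight-line homotopy between them never
leaves it. The homotopy fixes the base point because the two loops agree there.
-/

open Set

section UniformConcat

/-- `f` traverses the pieces `g 0, …, g (n - 1)` one after another, the piece `g k` on `[0, 1]`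
being run through by `f` on `[k / n, (k + 1) / n]`. Consecutive pieces then agree at their common
endpoint, since `f` has a single value there. -/
def IsUniformConcat {X : Type*} {n : ℕ} (f : ℝ → X) (g : Fin n → ℝ → X) : Prop :=
  ∀ k : Fin n, ∀ t ∈ Icc (0 : ℝ) 1, f (((k : ℕ) + t) / n) = g k t

theorem exists_eq_fin_add_div {𝕜 : Type*} [Field 𝕜] [LinearOrder 𝕜] [IsStrictOrderedRing 𝕜]
    [FloorSemiring 𝕜] (n : ℕ) [NeZero n] {t : 𝕜} (ht : t ∈ Icc (0 : 𝕜) 1) :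
    ∃ k : Fin n, ∃ u ∈ Icc (0 : 𝕜) 1, t = ((k : ℕ) + u) / n := by
  have hn : (0 : 𝕜) < n := Nat.cast_pos.2 (NeZero.pos n)
  rcases ht.2.lt_or_eq with ht_lt | rfl
  · have hnt : 0 ≤ n * t := mul_nonneg hn.le ht.1
    have hfloor : ⌊n * t⌋₊ < n := (Nat.floor_lt hnt).2 (mul_lt_of_lt_one_right hn ht_lt)
    refine ⟨⟨⌊n * t⌋₊, hfloor⟩, n * t - ⌊n * t⌋₊, ⟨?_, ?_⟩, ?_⟩
    · exact sub_nonneg.2 (Nat.floor_le hnt)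
    · exact sub_le_iff_le_add'.2 (Nat.lt_floor_add_one _).le
    · rw [add_sub_cancel, mul_div_cancel_left₀ _ hn.ne']
  · refine ⟨⟨n - 1, Nat.sub_one_lt (NeZero.ne n)⟩, 1, right_mem_Icc.2 zero_le_one, ?_⟩
    rw [← Nat.cast_add_one, Nat.sub_add_cancel (NeZero.pos n), div_self hn.ne']

namespace IsUniformConcat

variable {X E : Type*} {n : ℕ} [NeZero n]

theorem apply_zero {f : ℝ → X} {g : Fin n → ℝ → X} (h : IsUniformConcat f g) : f 0 = g 0 0 := by
  simpa using h 0 0 (left_mem_Icc.2 zero_le_one)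

theorem apply_one {f : ℝ → X} {g : Fin n → ℝ → X} (h : IsUniformConcat f g) :
    f 1 = g (-1) 1 := by
  have hlast : (((-1 : Fin n) : ℕ) + 1 : ℝ) / n = 1 := by
    obtain ⟨m, rfl⟩ := Nat.exists_eq_succ_of_ne_zero (NeZero.ne n)
    rw [Fin.coe_neg_one, ← Nat.cast_add_one, div_self (NeZero.ne _)]
  simpa only [hlast] using h (-1) 1 (right_mem_Icc.2 zero_le_one)

theorem continuousOn [TopologicalSpace X] {f : ℝ → X} {g : Fin n → ℝ → X}
    (h : IsUniformConcat f g) (hg : ∀ k, ContinuousOn (g k) (Icc 0 1)) :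
    ContinuousOn f (Icc 0 1) := by
  have hn : (n : ℝ) ≠ 0 := NeZero.ne _
  let rescale (k : Fin n) (x : ℝ) : ℝ := n * x - (k : ℕ)
  have hrescale (k : Fin n) : Continuous (rescale k) := by fun_prop
  have hcover : Icc (0 : ℝ) 1 ⊆ ⋃ k, rescale k ⁻¹' Icc 0 1 := by
    intro t ht
    obtain ⟨k, u, hu, rfl⟩ := exists_eq_fin_add_div n ht
    refine mem_iUnion.2 ⟨k, ?_⟩
    rwa [mem_preimage, show rescale k _ = u by simp only [rescale]; field_simp; ring]
  refine ContinuousOn.mono ?_ hcover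
  refine (locallyFinite_of_finite _).continuousOn_iUnion
    (fun k => isClosed_Icc.preimage (hrescale k)) fun k => ?_
  refine ((hg k).comp (hrescale k).continuousOn fun x hx => hx).congr fun x hx => ?_
  rw [Function.comp_apply, ← h k _ hx, add_sub_cancel, mul_div_cancel_left₀ _ hn]

theorem segment_subset_iUnion [AddCommGroup E] [Module ℝ E] {f₁ f₂ : ℝ → E}
    {g₁ g₂ : Fin n → ℝ → E} {K : Fin n → Set E} (h₁ : IsUniformConcat f₁ g₁)
    (h₂ : IsUniformConcat f₂ g₂) (hK : ∀ k, Convex ℝ (K k))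
    (hg₁ : ∀ k, MapsTo (g₁ k) (Icc 0 1) (K k)) (hg₂ : ∀ k, MapsTo (g₂ k) (Icc 0 1) (K k))
    {t : ℝ} (ht : t ∈ Icc (0 : ℝ) 1) : segment ℝ (f₁ t) (f₂ t) ⊆ ⋃ k, K k := by
  obtain ⟨k, u, hu, rfl⟩ := exists_eq_fin_add_div n ht
  rw [h₁ k u hu, h₂ k u hu]
  exact ((hK k).segment_subset (hg₁ k hu) (hg₂ k hu)).trans (subset_iUnion K k)

end IsUniformConcat

end UniformConcat

section LoopHomotopy

/-- The loops `f` and `g`, parametrized by `[0, 1]` and based at `x`, are homotopic relative to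
the base point within the set `U`. Only the restrictions of `f`, `g` and the homotopy `H` to the
unit interval and the unit square matter; the homotopy parameter is the first argument of `H`. -/
def LoopHomotopicIn {X : Type*} [TopologicalSpace X] (U : Set X) (x : X) (f g : ℝ → X) : Prop :=
  ∃ H : ℝ × ℝ → X,
    ContinuousOn H (Icc (0 : ℝ) 1 ×ˢ Icc (0 : ℝ) 1) ∧
    (∀ s ∈ Icc (0 : ℝ) 1, ∀ t ∈ Icc (0 : ℝ) 1, H (s, t) ∈ U) ∧
    (∀ t ∈ Icc (0 : ℝ) 1, H (0, t) = f t) ∧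
    (∀ t ∈ Icc (0 : ℝ) 1, H (1, t) = g t) ∧
    (∀ s ∈ Icc (0 : ℝ) 1, H (s, 0) = x ∧ H (s, 1) = x)

theorem loopHomotopicIn_of_segment_subset {E : Type*} [AddCommGroup E] [Module ℝ E]
    [TopologicalSpace E] [ContinuousAdd E] [ContinuousSMul ℝ E] {U : Set E} {x : E} {f g : ℝ → E}
    (hf : ContinuousOn f (Icc 0 1)) (hg : ContinuousOn g (Icc 0 1))
    (hU : ∀ t ∈ Icc (0 : ℝ) 1, segment ℝ (f t) (g t) ⊆ U)
    (hf₀ : f 0 = x) (hf₁ : f 1 = x) (hg₀ : g 0 = x) (hg₁ : g 1 = x) :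
    LoopHomotopicIn U x f g := by
  refine ⟨fun p => (1 - p.1) • f p.2 + p.1 • g p.2, ?_, ?_, ?_, ?_, ?_⟩
  · have hsnd : MapsTo Prod.snd (Icc (0 : ℝ) 1 ×ˢ Icc (0 : ℝ) 1) (Icc (0 : ℝ) 1) :=
      fun p hp => hp.2
    have hf_snd := hf.comp continuousOn_snd hsnd
    have hg_snd := hg.comp continuousOn_snd hsnd
    exact ((continuousOn_const.sub continuousOn_fst).smul hf_snd).add
      (continuousOn_fst.smul hg_snd)
  · exact fun s hs t ht => hU t ht ⟨1 - s, s, sub_nonneg.2 hs.2, hs.1, sub_add_cancel 1 s, rfl⟩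
  · simp
  · simp
  · intro s _
    simp only [hf₀, hf₁, hg₀, hg₁, Convex.combo_self (sub_add_cancel 1 s), and_self]

end LoopHomotopy

section BezierCurve

variable {E : Type*} [AddCommGroup E] [Module ℝ E] {d : ℕ}

/-- The Bézier curve of degree `d` with control points `P 0, …, P d`, as a polynomial map on all
of `ℝ`; the Bézier segment is its restriction to `[0, 1]`. -/
noncomputable def bezierCurve (P : Fin (d + 1) → E) (t : ℝ) : E :=
  ∑ i : Fin (d + 1), (bernsteinPolynomial ℝ d i).eval t • P i

theorem bezierCurve_zero (P : Fin (d + 1) → E) : bezierCurve P 0 = P 0 := by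
  simp [bezierCurve, bernsteinPolynomial.eval_at_0]

theorem bezierCurve_one (P : Fin (d + 1) → E) : bezierCurve P 1 = P (Fin.last d) := by
  have hlast (i : Fin (d + 1)) : (i : ℕ) = d ↔ i = Fin.last d := by simp [Fin.ext_iff]
  simp [bezierCurve, bernsteinPolynomial.eval_at_1, hlast]

theorem continuous_bezierCurve [TopologicalSpace E] [ContinuousAdd E] [ContinuousSMul ℝ E]
    (P : Fin (d + 1) → E) : Continuous (bezierCurve P) := by
  unfold bezierCurve
  fun_prop

theorem eval_bernsteinPolynomial_nonneg (d i : ℕ) {t : ℝ} (ht : t ∈ Icc (0 : ℝ) 1) :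
    0 ≤ (bernsteinPolynomial ℝ d i).eval t :=
  bernstein_nonneg (x := ⟨t, ht⟩)

theorem sum_eval_bernsteinPolynomial {R : Type*} [CommRing R] (d : ℕ) (t : R) :
    ∑ i : Fin (d + 1), (bernsteinPolynomial R d i).eval t = 1 := by
  rw [Fin.sum_univ_eq_sum_range fun i => (bernsteinPolynomial R d i).eval t,
    ← Polynomial.eval_finsetSum, bernsteinPolynomial.sum, Polynomial.eval_one]

theorem bezierCurve_mem_convexHull (P : Fin (d + 1) → E) {t : ℝ} (ht : t ∈ Icc (0 : ℝ) 1) :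
    bezierCurve P t ∈ convexHull ℝ (range P) :=
  (convex_convexHull ℝ _).sum_mem (fun i _ => eval_bernsteinPolynomial_nonneg d i ht)
    (sum_eval_bernsteinPolynomial d t) fun i _ => subset_convexHull ℝ _ (mem_range_self i)

theorem sum_bern_smul_eq_bezierCurve (P : Fin 4 → E) (t : ℝ) :
    ∑ i : Fin 4, bern i t • P i = bezierCurve P t := by
  simp [bezierCurve, bern, bernsteinPolynomial]

end BezierCurve

theorem bezier_loop_homotopic_to_nodal_polygon_general {E : Type*} [AddCommGroup E] [Module ℝ E]
    [TopologicalSpace E] [ContinuousAdd E] [ContinuousSMul ℝ E] {n d : ℕ} [NeZero n]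
    {P : Fin n → Fin (d + 1) → E} (hclosed : ∀ k, P k (Fin.last d) = P (k + 1) 0)
    {γ : ℝ → E} (hγ : IsUniformConcat γ fun k => bezierCurve (P k))
    {poly : ℝ → E} (hpoly : IsUniformConcat poly fun k t => (1 - t) • P k 0 + t • P (k + 1) 0)
    {U : Set E} (hU : ∀ k, convexHull ℝ (range (P k)) ⊆ U) :
    LoopHomotopicIn U (P 0 0) γ poly := by
  have hvertex (k : Fin n) (i : Fin (d + 1)) : P k i ∈ convexHull ℝ (range (P k)) :=
    subset_convexHull ℝ _ (mem_range_self i)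
  have hedge (k : Fin n) : MapsTo (fun t : ℝ => (1 - t) • P k 0 + t • P (k + 1) 0) (Icc 0 1)
      (convexHull ℝ (range (P k))) := fun t ht =>
    convex_convexHull ℝ _ (hvertex k 0) (hclosed k ▸ hvertex k (Fin.last d))
      (sub_nonneg.2 ht.2) ht.1 (sub_add_cancel 1 t)
  apply loopHomotopicIn_of_segment_subset
  · exact hγ.continuousOn fun k => (continuous_bezierCurve (P k)).continuousOn
  · exact hpoly.continuousOn fun k => by fun_prop
  · exact fun t ht => (hγ.segment_subset_iUnion hpoly (fun k => convex_convexHull ℝ _)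
      (fun k _ => bezierCurve_mem_convexHull (P k)) hedge ht).trans (iUnion_subset hU)
  · rw [hγ.apply_zero, bezierCurve_zero]
  · rw [hγ.apply_one, bezierCurve_one, hclosed, neg_add_cancel]
  · simp [hpoly.apply_zero]
  · simp [hpoly.apply_one]

/-- a closed piecewise cubic Bézier curve `γ` with `n` segments,
parametrized so that segment `k` occupies `[k/n, (k+1)/n]`, is homotopic as a loop
based at the first node, within `ℝ² \ {z}`, to the closed nodal polygon, whenever
`z` lies outside the convex hull of the control points of every segment.
(Consequently `γ` and the nodal polygon have the same winding number about `z`,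
loops that are homotopic in the punctured plane having equal winding numbers.) -/
theorem bezier_loop_homotopic_to_nodal_polygon (n : ℕ) [NeZero n]
    (P : Fin n → Fin 4 → ℝ × ℝ)
    (hclosed : ∀ k : Fin n, P k 3 = P (k + 1) 0)
    (γ : ℝ → ℝ × ℝ)
    (hγ : ∀ k : Fin n, ∀ t ∈ Set.Icc (0:ℝ) 1,
      γ (((k : ℕ) + t) / n) = ∑ i : Fin 4, bern i t • P k i)
    (poly : ℝ → ℝ × ℝ)
    (hpoly : ∀ k : Fin n, ∀ t ∈ Set.Icc (0:ℝ) 1,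
      poly (((k : ℕ) + t) / n) = (1 - t) • P k 0 + t • P (k + 1) 0)
    (z : ℝ × ℝ)
    (hz : ∀ k : Fin n, z ∉ convexHull ℝ (Set.range (P k))) :
    ∃ H : ℝ × ℝ → ℝ × ℝ,
      ContinuousOn H (Set.Icc (0:ℝ) 1 ×ˢ Set.Icc (0:ℝ) 1) ∧
      (∀ s ∈ Set.Icc (0:ℝ) 1, ∀ t ∈ Set.Icc (0:ℝ) 1, H (s, t) ≠ z) ∧
      (∀ t ∈ Set.Icc (0:ℝ) 1, H (0, t) = γ t) ∧
      (∀ t ∈ Set.Icc (0:ℝ) 1, H (1, t) = poly t) ∧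
      (∀ s ∈ Set.Icc (0:ℝ) 1, H (s, 0) = P 0 0 ∧ H (s, 1) = P 0 0) := by
  simp only [sum_bern_smul_eq_bezierCurve] at hγ
  exact bezier_loop_homotopic_to_nodal_polygon_general hclosed hγ hpoly
    fun k => subset_compl_singleton_iff.2 (hz k)
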